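/- arXiv:2303.16174 — 6 statements merged into one kernel-verified Lean document; each statement's English description precedes it below -/
import Mathlib

section
/- For all real numbers ℓ₁, ℓ₂ > 0, the space M(ℓ₁, ℓ₂) is metrizable and Δ-generated; in particular the compact-open topology on M(ℓ₁, ℓ₂) coincides with its Δ-kelleyfication. -/
/-- `M ℓ ℓ'` : the space of continuous nondecreasing surjective maps `[0,ℓ] → [0,ℓ']`,
topologized as a subspace of the space of continuous maps with the compact-open topology. -/
def MSp (ℓ ℓ' : ℝ) : Type :=
  {f : C(Set.Icc (0:ℝ) ℓ, Set.Icc (0:ℝ) ℓ') // Monotone f ∧ Function.Surjective f}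

instance (ℓ ℓ' : ℝ) : TopologicalSpace (MSp ℓ ℓ') :=
  inferInstanceAs (TopologicalSpace {f : C(Set.Icc (0:ℝ) ℓ, Set.Icc (0:ℝ) ℓ') //
    Monotone f ∧ Function.Surjective f})

/-!
In a first-countable locally path-connected space, a point `x` has an antitone basis of
path-connected neighbourhoods `V n`. If `x` had no neighbourhood inside `U`, one could pick
`y n ∈ V n \ U` and join `y n` to `y (n + 1)` inside `V n`; the infinite concatenation of these
paths converges to `x`, so it closes up to a curve at `x` that leaves `U` arbitrarily close to `x`.
Hence the topology is detected by curves `ℝ → X`. The space `M ℓ ℓ'` embeds in the Banach space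
`C([0, ℓ], ℝ)` as a convex set, because a continuous monotone map has range `[c, d]` if and only if
it sends the least element to `c` and the greatest to `d`.
-/

open Filter Function Set Topology

section Curves

variable {X : Type*} [TopologicalSpace X]

/-- The infinite concatenation of a sequence of composable paths, the `n`-th path being run through
on `[n, n + 1]`. It is extended to negative times by the starting point `y 0`, so that it is a map
on `ℝ`. -/
noncomputable def concatRay {y : ℕ → X} (p : ∀ n, Path (y n) (y (n + 1))) (s : ℝ) : X :=
  (p ⌊s⌋₊).extend (s - ⌊s⌋₊)

section concatRay

variable {y : ℕ → X} (p : ∀ n, Path (y n) (y (n + 1)))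

lemma concatRay_natCast (n : ℕ) : concatRay p n = y n := by
  simp [concatRay]

lemma concatRay_mem_range (s : ℝ) : concatRay p s ∈ range (p ⌊s⌋₊) :=
  (p ⌊s⌋₊).extend_range ▸ mem_range_self _

lemma concatRay_of_nonpos {s : ℝ} (hs : s ≤ 0) : concatRay p s = y 0 := by
  simp [concatRay, Nat.floor_of_nonpos hs, Path.extend_of_le_zero _ hs]

lemma concatRay_eqOn_Icc (n : ℕ) :
    EqOn (concatRay p) (fun s ↦ (p n).extend (s - n)) (Icc n (n + 1)) := by
  rintro s ⟨hns, hsn⟩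
  rcases hsn.lt_or_eq with hlt | rfl
  · have hfloor : ⌊s⌋₊ = n := Nat.floor_eq_on_Ico n s ⟨hns, hlt⟩
    simp only [concatRay]
    rw [hfloor]
  · simpa using concatRay_natCast p (n + 1)

lemma continuousOn_concatRay_Iic (n : ℕ) : ContinuousOn (concatRay p) (Iic n) := by
  induction n with
  | zero =>
    exact continuousOn_const.congr fun s hs ↦ concatRay_of_nonpos p (by simpa using hs)
  | succ n ih =>
    have hlast : ContinuousOn (concatRay p) (Icc n (n + 1)) :=
      ContinuousOn.congr (by fun_prop) (concatRay_eqOn_Icc p n)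
    rw [Nat.cast_add_one, ← Iic_union_Icc_eq_Iic (le_add_of_nonneg_right zero_le_one)]
    exact ih.union_of_isClosed hlast isClosed_Iic isClosed_Icc

lemma continuous_concatRay : Continuous (concatRay p) := by
  refine continuous_iff_continuousAt.2 fun s ↦ ?_
  obtain ⟨n, hn⟩ := exists_nat_gt s
  exact (continuousOn_concatRay_Iic p n).continuousAt (Iic_mem_nhds hn)

lemma tendsto_concatRay_atTop {l : Filter X} (hp : ∀ U ∈ l, ∀ᶠ n in atTop, range (p n) ⊆ U) :
    Tendsto (concatRay p) atTop l := fun U hU ↦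
  (tendsto_nat_floor_atTop.eventually (hp U hU)).mono fun s hs ↦ hs (concatRay_mem_range p s)

end concatRay

lemma continuous_update_comp_inv_abs {g : ℝ → X} {x : X} (hg : Continuous g)
    (hgx : Tendsto g atTop (𝓝 x)) : Continuous (update (fun t ↦ g |t|⁻¹) 0 x) := by
  refine continuous_iff_continuousAt.2 fun t ↦ ?_
  rcases eq_or_ne t 0 with rfl | ht
  · have hinv : Tendsto (fun t : ℝ ↦ |t|⁻¹) (𝓝[≠] 0) atTop :=
      tendsto_inv_nhdsGT_zero.comp tendsto_abs_nhdsNE_zero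
    exact continuousAt_update_same.2 (hgx.comp hinv)
  · have hinv : ContinuousAt (fun t : ℝ ↦ |t|⁻¹) t :=
      continuous_abs.continuousAt.inv₀ (abs_ne_zero.2 ht)
    exact (continuousAt_update_of_ne ht).2 (hg.continuousAt.comp hinv)

lemma exists_curve_forall_inv_eq {x : X} {V : ℕ → Set X} (hV : (𝓝 x).HasAntitoneBasis V)
    (hVpath : ∀ n, IsPathConnected (V n)) {y : ℕ → X} (hy : ∀ n, y n ∈ V n) :
    ∃ γ : ℝ → X, Continuous γ ∧ γ 0 = x ∧ ∀ n : ℕ, n ≠ 0 → γ (n : ℝ)⁻¹ = y n := by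
  have hjoined : ∀ n, JoinedIn (V n) (y n) (y (n + 1)) := fun n ↦
    (hVpath n).joinedIn _ (hy n) _ (hV.antitone n.le_succ (hy (n + 1)))
  choose p hpV using hjoined
  have hlim : Tendsto (concatRay p) atTop (𝓝 x) := by
    refine tendsto_concatRay_atTop p fun U hU ↦ ?_
    filter_upwards [hV.eventually_subset hU] with n hn
    exact range_subset_iff.2 fun t ↦ hn (hpV n t)
  refine ⟨_, continuous_update_comp_inv_abs (continuous_concatRay p) hlim, update_self .., ?_⟩
  intro n hn
  have hn_inv : (n : ℝ)⁻¹ ≠ 0 := inv_ne_zero (Nat.cast_ne_zero.2 hn)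
  rw [update_of_ne hn_inv, abs_of_nonneg (by positivity), inv_inv, concatRay_natCast]

lemma mem_nhds_of_forall_curve [FirstCountableTopology X] [LocallyPathConnectedSpace X]
    {x : X} {U : Set X} (hU : ∀ γ : ℝ → X, Continuous γ → γ 0 = x → γ ⁻¹' U ∈ 𝓝 0) :
    U ∈ 𝓝 x := by
  obtain ⟨V, hVpath, hV⟩ := (path_connected_basis x).exists_antitone_subbasis
  by_contra hxU
  have hescape : ∀ n, ∃ y ∈ V n, y ∉ U := fun n ↦
    not_subset.1 fun hVU ↦ hxU (mem_of_superset (hV.mem n) hVU)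
  choose y hyV hyU using hescape
  obtain ⟨γ, hγ, hγ0, hγy⟩ := exists_curve_forall_inv_eq hV (fun n ↦ (hVpath n).2) hyV
  have hγU : ∀ᶠ n : ℕ in atTop, γ (n : ℝ)⁻¹ ∈ U :=
    tendsto_inv_atTop_nhds_zero_nat.eventually (hU γ hγ hγ0)
  obtain ⟨n, hnU, hn⟩ := (hγU.and (eventually_ne_atTop 0)).exists
  exact hyU n (hγy n hn ▸ hnU)

end Curves

section DeltaGenerated

variable {X : Type*} [TopologicalSpace X]

lemma deltaGeneratedSpace_of_isOpen_of_forall_curve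
    (h : ∀ U : Set X, (∀ γ : ℝ → X, Continuous γ → IsOpen (γ ⁻¹' U)) → IsOpen U) :
    DeltaGeneratedSpace X := by
  rw [DeltaGeneratedSpace, IsGeneratedBy.iff_le_generatedBy]
  refine fun U hU ↦ h U fun γ hγ ↦ ?_
  have hpreimage : IsOpen ((fun v : Fin 1 → ℝ ↦ γ (v 0)) ⁻¹' U) :=
    WithGeneratedByTopology.isOpen_iff.1 hU (i := 1) ⟨fun v ↦ γ (v 0), by fun_prop⟩
  exact hpreimage.preimage (f := fun t : ℝ ↦ fun _ : Fin 1 ↦ t) (by fun_prop)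

lemma deltaGeneratedSpace_of_locallyPathConnectedSpace [FirstCountableTopology X]
    [LocallyPathConnectedSpace X] : DeltaGeneratedSpace X :=
  deltaGeneratedSpace_of_isOpen_of_forall_curve fun _ hU ↦ isOpen_iff_mem_nhds.2 fun _ hx ↦
    mem_nhds_of_forall_curve fun γ hγ hγ0 ↦ (hU γ hγ).mem_nhds (by rwa [mem_preimage, hγ0])

lemma deltaGeneratedSpace_of_isEmbedding_of_convex_range {E : Type*} [AddCommGroup E] [Module ℝ E]
    [TopologicalSpace E] [IsTopologicalAddGroup E] [ContinuousSMul ℝ E] [LocallyConvexSpace ℝ E]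
    [FirstCountableTopology E] {e : X → E} (he : IsEmbedding e) (hconv : Convex ℝ (range e)) :
    DeltaGeneratedSpace X :=
  have : LocallyPathConnectedSpace (range e) := hconv.locallyPathConnectedSpace
  have : DeltaGeneratedSpace (range e) := deltaGeneratedSpace_of_locallyPathConnectedSpace
  he.toHomeomorph.symm.isQuotientMap.isGeneratedBy

lemma deltaGenerated_eq [DeltaGeneratedSpace X] :
    TopologicalSpace.deltaGenerated X = ‹TopologicalSpace X› :=
  iSup_sigma.trans IsGeneratedBy.generatedBy_eq

end DeltaGenerated

section MonotoneMaps

variable {α : Type*} [Preorder α] [BoundedOrder α] [TopologicalSpace α] [PreconnectedSpace α]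
  {β : Type*} [LinearOrder β] [TopologicalSpace β] [OrderClosedTopology β] {f : α → β}

lemma range_eq_Icc_of_monotone_of_continuous (hf : Monotone f) (hfc : Continuous f) :
    range f = Icc (f ⊥) (f ⊤) :=
  have hsub : range f ⊆ Icc (f ⊥) (f ⊤) := range_subset_iff.2 fun _ ↦ ⟨hf bot_le, hf le_top⟩
  hsub.antisymm (intermediate_value_univ _ _ hfc)

lemma range_eq_Icc_iff_of_monotone_of_continuous (hf : Monotone f) (hfc : Continuous f) {c d : β} :
    range f = Icc c d ↔ f ⊥ = c ∧ f ⊤ = d := by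
  rw [range_eq_Icc_of_monotone_of_continuous hf hfc, Icc_eq_Icc_iff (hf bot_le)]

lemma convex_setOf_monotone_and_range_eq_Icc (c d : ℝ) :
    Convex ℝ {f : C(α, ℝ) | Monotone f ∧ range f = Icc c d} := by
  rintro f ⟨hf, hf_range⟩ g ⟨hg, hg_range⟩ s t hs ht hst
  obtain ⟨hf_bot, hf_top⟩ := (range_eq_Icc_iff_of_monotone_of_continuous hf f.continuous).1 hf_range
  obtain ⟨hg_bot, hg_top⟩ := (range_eq_Icc_iff_of_monotone_of_continuous hg g.continuous).1 hg_range
  have hmono : Monotone ⇑(s • f + t • g) := (hf.const_smul hs).add (hg.const_smul ht)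
  refine ⟨hmono, (range_eq_Icc_iff_of_monotone_of_continuous hmono (map_continuous _)).2 ⟨?_, ?_⟩⟩
  · simp [hf_bot, hg_bot, ← add_mul, hst]
  · simp [hf_top, hg_top, ← add_mul, hst]

end MonotoneMaps

namespace MSp

variable {a b : ℝ}

/-- A map in `M a b` seen as a real-valued function: the inclusion of `M a b` into the Banach space
of continuous functions on `[0, a]`. -/
def toRealMap (f : MSp a b) : C(Icc (0 : ℝ) a, ℝ) :=
  ContinuousMap.comp ⟨Subtype.val, continuous_subtype_val⟩ f.1

lemma isEmbedding_toRealMap : IsEmbedding (toRealMap (a := a) (b := b)) :=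
  (ContinuousMap.isEmbedding_postcomp _ .subtypeVal).comp .subtypeVal

lemma range_toRealMap :
    range (toRealMap (a := a) (b := b)) =
      {g : C(Icc (0 : ℝ) a, ℝ) | Monotone g ∧ range g = Icc 0 b} := by
  ext g
  constructor
  · rintro ⟨⟨f, hf, hf_surj⟩, rfl⟩
    exact ⟨fun _ _ h ↦ hf h, (hf_surj.range_comp Subtype.val).trans Subtype.range_coe⟩
  · rintro ⟨hg, hg_range⟩
    have hg_mem : ∀ x, g x ∈ Icc 0 b := fun x ↦ hg_range ▸ mem_range_self x
    refine ⟨⟨⟨fun x ↦ ⟨g x, hg_mem x⟩, by fun_prop⟩, fun _ _ h ↦ hg h, ?_⟩, rfl⟩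
    rintro ⟨z, hz⟩
    obtain ⟨x, rfl⟩ := hg_range.ge hz
    exact ⟨x, rfl⟩

instance metrizableSpace : TopologicalSpace.MetrizableSpace (MSp a b) :=
  isEmbedding_toRealMap.metrizableSpace

instance deltaGeneratedSpace [Fact (0 ≤ a)] : DeltaGeneratedSpace (MSp a b) := by
  have : PreconnectedSpace (Icc 0 a) := Subtype.preconnectedSpace isPreconnected_Icc
  refine deltaGeneratedSpace_of_isEmbedding_of_convex_range isEmbedding_toRealMap ?_
  rw [range_toRealMap]
  exact convex_setOf_monotone_and_range_eq_Icc 0 b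

end MSp

/-- For all `ℓ₁, ℓ₂ > 0`, the space `M(ℓ₁, ℓ₂)` is metrizable and Δ-generated; in particular
its (compact-open) topology coincides with its Δ-kelleyfication. -/
theorem stmt1 (ℓ₁ ℓ₂ : ℝ) (hℓ₁ : 0 < ℓ₁) (hℓ₂ : 0 < ℓ₂) :
    TopologicalSpace.MetrizableSpace (MSp ℓ₁ ℓ₂) ∧ DeltaGeneratedSpace (MSp ℓ₁ ℓ₂) ∧
      (inferInstance : TopologicalSpace (MSp ℓ₁ ℓ₂)) =
        TopologicalSpace.deltaGenerated (MSp ℓ₁ ℓ₂) := by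
  have : Fact (0 ≤ ℓ₁) := ⟨hℓ₁.le⟩
  exact ⟨MSp.metrizableSpace, MSp.deltaGeneratedSpace, deltaGenerated_eq.symm⟩
end

section
/- Let ℓ, ℓ' > 0, let φ ∈ M(ℓ, ℓ'), let n ≥ 1, and let ℓ'₁, …, ℓ'_n > 0 with ℓ'₁ + ⋯ + ℓ'_n = ℓ'. Then there exist real numbers ℓ₁, …, ℓ_n > 0 with ℓ₁ + ⋯ + ℓ_n = ℓ and maps φ_i ∈ M(ℓ_i, ℓ'_i) for 1 ≤ i ≤ n such that φ = φ₁ ⊗ ⋯ ⊗ φ_n. Moreover, if φ is injective (i.e., φ is a nondecreasing homeomorphism), then the numbers ℓ_i and the maps φ_i are uniquely determined, and each φ_i is a nondecreasing homeomorphism. -/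
open Set

/-- `IsMFun ℓ ℓ' f` : the function `f : ℝ → ℝ`, viewed as a map `[0,ℓ] → [0,ℓ']`, is an
element of `M(ℓ, ℓ')`, i.e. it is continuous, nondecreasing and surjective on `[0, ℓ]`
with image `[0, ℓ']`. -/
def IsMFun (ℓ ℓ' : ℝ) (f : ℝ → ℝ) : Prop :=
  ContinuousOn f (Icc 0 ℓ) ∧ MonotoneOn f (Icc 0 ℓ) ∧ f '' Icc 0 ℓ = Icc 0 ℓ'

/-- Partial sums `ℓs 0 + ⋯ + ℓs (k-1)` of a finite list of lengths. -/
def psum {n : ℕ} (ℓs : Fin n → ℝ) (k : ℕ) : ℝ :=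
  ∑ j ∈ Finset.range k, if h : j < n then ℓs ⟨j, h⟩ else 0

/-- `IsTensorDecomp φ ℓs ℓ's φs` : `φ = φs 0 ⊗ ⋯ ⊗ φs (n-1)` as maps
`[0, ℓs 0 + ⋯ + ℓs (n-1)] → [0, ℓ's 0 + ⋯ + ℓ's (n-1)]`, i.e. on each subinterval
`[ℓs 0 + ⋯ + ℓs (i-1), ℓs 0 + ⋯ + ℓs i]` the map `φ` is given by the correspondingly
translated copy of `φs i`. -/
def IsTensorDecomp {n : ℕ} (φ : ℝ → ℝ) (ℓs ℓ's : Fin n → ℝ) (φs : Fin n → ℝ → ℝ) : Prop :=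
  ∀ i : Fin n, ∀ t ∈ Icc (psum ℓs i) (psum ℓs (i + 1)),
    φ t = φs i (t - psum ℓs i) + psum ℓ's i

/-!
A factorization of `φ` along `ℓ' = ℓ'₁ + ⋯ + ℓ'ₙ` amounts to a choice of cut points
`0 = c₀ < c₁ < ⋯ < cₙ = ℓ` with `φ cₖ = ℓ'₁ + ⋯ + ℓ'ₖ`: the factors are then forced to be the
translated restrictions of `φ` to the intervals `[cₖ, cₖ₊₁]`. Surjectivity of `φ` provides such
cut points, monotonicity orders them strictly, and injectivity of `φ` makes them unique.
-/

section PartialSums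

variable {n : ℕ} {a b : Fin n → ℝ}

theorem psum_zero (a : Fin n → ℝ) : psum a 0 = 0 := by
  simp [psum]

theorem psum_succ (a : Fin n → ℝ) (i : Fin n) : psum a (i + 1) = psum a i + a i := by
  simp [psum, Finset.sum_range_succ]

theorem psum_eq_sum (a : Fin n → ℝ) : psum a n = ∑ i, a i := by
  simp [psum, Finset.sum_range]

theorem psum_monotone (ha : ∀ i, 0 ≤ a i) : Monotone (psum a) := by
  refine (Finset.sum_mono_set_of_nonneg fun j => ?_).comp Finset.range_mono
  split_ifs
  exacts [ha _, le_rfl]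

theorem psum_mem_Icc (ha : ∀ i, 0 ≤ a i) {k : ℕ} (hk : k ≤ n) :
    psum a k ∈ Icc 0 (∑ i, a i) := by
  rw [← psum_zero a, ← psum_eq_sum]
  exact ⟨psum_monotone ha k.zero_le, psum_monotone ha hk⟩

theorem psum_sub (c : ℕ → ℝ) {k : ℕ} (hk : k ≤ n) :
    psum (fun i : Fin n => c (i + 1) - c i) k = c k - c 0 := by
  rw [← Finset.sum_range_sub, psum]
  exact Finset.sum_congr rfl fun j hj => dif_pos ((Finset.mem_range.1 hj).trans_le hk)

theorem eq_of_psum_eq (h : ∀ k ≤ n, psum a k = psum b k) : a = b := by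
  funext i
  have h_succ := h (i + 1) i.2
  rw [psum_succ, psum_succ, h i i.2.le] at h_succ
  exact add_left_cancel h_succ

theorem mapsTo_add_psum (ha : ∀ i, 0 ≤ a i) (i : Fin n) :
    MapsTo (· + psum a i) (Icc 0 (a i)) (Icc 0 (∑ j, a j)) := by
  intro t ht
  have h_left := (psum_mem_Icc ha i.2.le).1
  have h_right := (psum_mem_Icc ha i.2).2
  rw [psum_succ] at h_right
  exact ⟨by linarith [ht.1], by linarith [ht.2]⟩

end PartialSums

section IsMFun

variable {ℓ ℓ' : ℝ} {f : ℝ → ℝ}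

theorem IsMFun.nonneg (hf : IsMFun ℓ ℓ' f) (hℓ' : 0 ≤ ℓ') : 0 ≤ ℓ :=
  nonempty_Icc.1 (image_nonempty.1 (hf.2.2 ▸ nonempty_Icc.2 hℓ'))

theorem IsMFun.map_zero (hf : IsMFun ℓ ℓ' f) (hℓ' : 0 ≤ ℓ') : f 0 = 0 := by
  have h_least := hf.2.1.map_isLeast (isLeast_Icc (hf.nonneg hℓ'))
  rw [hf.2.2] at h_least
  exact h_least.unique (isLeast_Icc hℓ')

theorem IsMFun.map_length (hf : IsMFun ℓ ℓ' f) (hℓ' : 0 ≤ ℓ') : f ℓ = ℓ' := by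
  have h_greatest := hf.2.1.map_isGreatest (isGreatest_Icc (hf.nonneg hℓ'))
  rw [hf.2.2] at h_greatest
  exact h_greatest.unique (isGreatest_Icc hℓ')

theorem IsMFun.exists_rightInvOn (hf : IsMFun ℓ ℓ' f) (hℓ' : 0 < ℓ') :
    ∃ s : ℝ → ℝ, s 0 = 0 ∧ s ℓ' = ℓ ∧
      MapsTo s (Icc 0 ℓ') (Icc 0 ℓ) ∧ RightInvOn s f (Icc 0 ℓ') := by
  have h_preimage : ∀ y ∈ Icc 0 ℓ', ∃ x ∈ Icc 0 ℓ,
      f x = y ∧ (y = 0 → x = 0) ∧ (y = ℓ' → x = ℓ) := by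
    intro y hy
    have hℓ := hf.nonneg hℓ'.le
    rcases eq_or_ne y 0 with rfl | hy_zero
    · exact ⟨0, left_mem_Icc.2 hℓ, hf.map_zero hℓ'.le, fun _ => rfl, fun h => absurd h hℓ'.ne⟩
    rcases eq_or_ne y ℓ' with rfl | hy_end
    · exact ⟨ℓ, right_mem_Icc.2 hℓ, hf.map_length hy.1, fun h => absurd h hy_zero, fun _ => rfl⟩
    obtain ⟨x, hx, hxy⟩ := hf.2.2.ge hy
    exact ⟨x, hx, hxy, fun h => absurd h hy_zero, fun h => absurd h hy_end⟩
  choose! s hs_mem hs_inv hs_zero hs_end using h_preimage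
  exact ⟨s, hs_zero 0 (left_mem_Icc.2 hℓ'.le) rfl, hs_end ℓ' (right_mem_Icc.2 hℓ'.le) rfl,
    hs_mem, hs_inv⟩

theorem isMFun_translate {a b : ℝ} (hab : a ≤ b) (hf_cont : ContinuousOn f (Icc a b))
    (hf_mono : MonotoneOn f (Icc a b)) :
    IsMFun (b - a) (f b - f a) (fun t => f (t + a) - f a) := by
  have h_maps : MapsTo (· + a) (Icc 0 (b - a)) (Icc a b) := fun t ht =>
    ⟨by linarith [ht.1], by linarith [ht.2]⟩
  have h_cont : ContinuousOn (fun t => f (t + a) - f a) (Icc 0 (b - a)) :=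
    (hf_cont.comp (by fun_prop) h_maps).sub continuousOn_const
  have h_mono : MonotoneOn (fun t => f (t + a) - f a) (Icc 0 (b - a)) := fun s hs t ht hst =>
    sub_le_sub_right (hf_mono (h_maps hs) (h_maps ht) (add_le_add_left hst a)) _
  refine ⟨h_cont, h_mono, ?_⟩
  simpa using h_cont.image_Icc_of_monotoneOn (sub_nonneg.2 hab) h_mono

end IsMFun

section Factorization

variable {n : ℕ} {ℓ ℓ' : ℝ} {φ : ℝ → ℝ} {ℓs ℓs₁ ℓs₂ ℓ's : Fin n → ℝ}
  {φs φs₁ φs₂ : Fin n → ℝ → ℝ}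

theorem isTensorDecomp_iff_eqOn :
    IsTensorDecomp φ ℓs ℓ's φs ↔
      ∀ i, EqOn (φs i) (fun t => φ (t + psum ℓs i) - psum ℓ's i) (Icc 0 (ℓs i)) := by
  refine forall_congr' fun i => ⟨fun h t ht => ?_, fun h t ht => ?_⟩
  · have h_mem : t + psum ℓs i ∈ Icc (psum ℓs i) (psum ℓs (i + 1)) := by
      rw [psum_succ]
      exact ⟨by linarith [ht.1], by linarith [ht.2]⟩
    simp [h _ h_mem]
  · rw [psum_succ] at ht
    have h_mem : t - psum ℓs i ∈ Icc 0 (ℓs i) := ⟨by linarith [ht.1], by linarith [ht.2]⟩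
    simp [h h_mem]

/-- `IsFactorization ℓ φ ℓ's ℓs φs`: the lengths `ℓs` and the maps `φs` exhibit `φ`, viewed as a map
on `[0, ℓ]`, as the tensor product `φs 0 ⊗ ⋯ ⊗ φs (n-1)` with `φs i ∈ M(ℓs i, ℓ's i)`. -/
structure IsFactorization (ℓ : ℝ) (φ : ℝ → ℝ) (ℓ's ℓs : Fin n → ℝ) (φs : Fin n → ℝ → ℝ) :
    Prop where
  pos : ∀ i, 0 < ℓs i
  sum_eq : ∑ i, ℓs i = ℓ
  isMFun : ∀ i, IsMFun (ℓs i) (ℓ's i) (φs i)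
  isTensorDecomp : IsTensorDecomp φ ℓs ℓ's φs

theorem isFactorization_of_map_psum (hφ_cont : ContinuousOn φ (Icc 0 ℓ))
    (hφ_mono : MonotoneOn φ (Icc 0 ℓ)) (h_pos : ∀ i, 0 < ℓs i) (h_sum : ∑ i, ℓs i = ℓ)
    (h_map : ∀ k ≤ n, φ (psum ℓs k) = psum ℓ's k) :
    IsFactorization ℓ φ ℓ's ℓs (fun i t => φ (t + psum ℓs i) - psum ℓ's i) where
  pos := h_pos
  sum_eq := h_sum
  isMFun i := by
    subst h_sum
    have h_nonneg : ∀ j, 0 ≤ ℓs j := fun j => (h_pos j).le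
    have h_sub : Icc (psum ℓs i) (psum ℓs (i + 1)) ⊆ Icc 0 (∑ j, ℓs j) :=
      Icc_subset_Icc (psum_mem_Icc h_nonneg i.2.le).1 (psum_mem_Icc h_nonneg i.2).2
    have h_translate := isMFun_translate (psum_monotone h_nonneg (Nat.le_succ i))
      (hφ_cont.mono h_sub) (hφ_mono.mono h_sub)
    rwa [h_map i i.2.le, h_map (i + 1) i.2, psum_succ, psum_succ, add_sub_cancel_left,
      add_sub_cancel_left] at h_translate
  isTensorDecomp := isTensorDecomp_iff_eqOn.2 fun _ => eqOn_refl _ _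

theorem IsMFun.exists_isFactorization (hφ : IsMFun ℓ ℓ' φ) (hℓ' : 0 < ℓ')
    (h_pos : ∀ i, 0 < ℓ's i) (h_sum : ∑ i, ℓ's i = ℓ') :
    ∃ ℓs φs, IsFactorization ℓ φ ℓ's ℓs φs := by
  obtain ⟨s, hs_zero, hs_end, hs_mem, hs_inv⟩ := hφ.exists_rightInvOn hℓ'
  have h_mem : ∀ k ≤ n, psum ℓ's k ∈ Icc 0 ℓ' := fun k hk =>
    h_sum ▸ psum_mem_Icc (fun i => (h_pos i).le) hk
  have h_lt (i : Fin n) : s (psum ℓ's i) < s (psum ℓ's (i + 1)) := by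
    refine hφ.2.1.reflect_lt (hs_mem (h_mem _ i.2.le)) (hs_mem (h_mem _ i.2)) ?_
    rw [hs_inv (h_mem _ i.2.le), hs_inv (h_mem _ i.2), psum_succ]
    exact lt_add_of_pos_right _ (h_pos i)
  have h_psum : ∀ k ≤ n,
      psum (fun i : Fin n => s (psum ℓ's (i + 1)) - s (psum ℓ's i)) k = s (psum ℓ's k) := by
    intro k hk
    rw [psum_sub (fun k => s (psum ℓ's k)) hk, psum_zero, hs_zero, sub_zero]
  refine ⟨_, _, isFactorization_of_map_psum hφ.1 hφ.2.1 (fun i => sub_pos.2 (h_lt i)) ?_ ?_⟩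
  · rw [← psum_eq_sum, h_psum n le_rfl, psum_eq_sum, h_sum, hs_end]
  · intro k hk
    rw [h_psum k hk, hs_inv (h_mem k hk)]

namespace IsFactorization

theorem map_psum (h : IsFactorization ℓ φ ℓ's ℓs φs) (i : Fin n) (h_nonneg : 0 ≤ ℓ's i) :
    φ (psum ℓs i) = psum ℓ's i := by
  have h_zero := isTensorDecomp_iff_eqOn.1 h.isTensorDecomp i (left_mem_Icc.2 (h.pos i).le)
  simp only [(h.isMFun i).map_zero h_nonneg, zero_add] at h_zero
  exact sub_eq_zero.1 h_zero.symm

theorem lengths_eq (hφ : InjOn φ (Icc 0 ℓ)) (h_nonneg : ∀ i, 0 ≤ ℓ's i)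
    (h₁ : IsFactorization ℓ φ ℓ's ℓs₁ φs₁) (h₂ : IsFactorization ℓ φ ℓ's ℓs₂ φs₂) :
    ℓs₁ = ℓs₂ := by
  refine eq_of_psum_eq fun k hk => ?_
  rcases hk.lt_or_eq with hk_lt | rfl
  · have h_mem₁ := psum_mem_Icc (fun i => (h₁.pos i).le) hk
    have h_mem₂ := psum_mem_Icc (fun i => (h₂.pos i).le) hk
    rw [h₁.sum_eq] at h_mem₁
    rw [h₂.sum_eq] at h_mem₂
    exact hφ h_mem₁ h_mem₂
      ((h₁.map_psum ⟨k, hk_lt⟩ (h_nonneg _)).trans (h₂.map_psum ⟨k, hk_lt⟩ (h_nonneg _)).symm)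
  · rw [psum_eq_sum, psum_eq_sum, h₁.sum_eq, h₂.sum_eq]

theorem unique (hφ : InjOn φ (Icc 0 ℓ)) (h_nonneg : ∀ i, 0 ≤ ℓ's i)
    (h₁ : IsFactorization ℓ φ ℓ's ℓs₁ φs₁) (h₂ : IsFactorization ℓ φ ℓ's ℓs₂ φs₂) :
    ℓs₁ = ℓs₂ ∧ ∀ i, EqOn (φs₁ i) (φs₂ i) (Icc 0 (ℓs₁ i)) := by
  obtain rfl := lengths_eq hφ h_nonneg h₁ h₂
  exact ⟨rfl, fun i => (isTensorDecomp_iff_eqOn.1 h₁.isTensorDecomp i).trans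
    (isTensorDecomp_iff_eqOn.1 h₂.isTensorDecomp i).symm⟩

theorem injOn (hφ : InjOn φ (Icc 0 ℓ)) (h : IsFactorization ℓ φ ℓ's ℓs φs) (i : Fin n) :
    InjOn (φs i) (Icc 0 (ℓs i)) := by
  have h_maps : MapsTo (· + psum ℓs i) (Icc 0 (ℓs i)) (Icc 0 ℓ) :=
    h.sum_eq ▸ mapsTo_add_psum (fun j => (h.pos j).le) i
  refine (isTensorDecomp_iff_eqOn.1 h.isTensorDecomp i).injOn_iff.2 ?_
  exact sub_left_injective.comp_injOn (hφ.comp (add_left_injective _).injOn h_maps)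

end IsFactorization

end Factorization

/-- Any `φ ∈ M(ℓ, ℓ')` decomposes as a tensor product `φ = φ₁ ⊗ ⋯ ⊗ φ_n` along any
decomposition `ℓ' = ℓ'₁ + ⋯ + ℓ'_n` of the target length into `n ≥ 1` positive lengths;
moreover, if `φ` is injective (i.e. a nondecreasing homeomorphism), then the lengths `ℓᵢ`
and the maps `φᵢ` (on their intervals of definition) are uniquely determined, and each
`φᵢ` is injective, i.e. a nondecreasing homeomorphism. -/
theorem stmt4 (ℓ ℓ' : ℝ) (hℓ : 0 < ℓ) (hℓ' : 0 < ℓ')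
    (φ : ℝ → ℝ) (hφ : IsMFun ℓ ℓ' φ)
    (n : ℕ) (hn : 1 ≤ n) (ℓ's : Fin n → ℝ) (hpos : ∀ i, 0 < ℓ's i)
    (hsum : (∑ i, ℓ's i) = ℓ') :
    (∃ ℓs : Fin n → ℝ, ∃ φs : Fin n → ℝ → ℝ,
      (∀ i, 0 < ℓs i) ∧ (∑ i, ℓs i) = ℓ ∧
      (∀ i, IsMFun (ℓs i) (ℓ's i) (φs i)) ∧
      IsTensorDecomp φ ℓs ℓ's φs) ∧
    (InjOn φ (Icc 0 ℓ) →
      (∀ (ℓs₁ ℓs₂ : Fin n → ℝ) (φs₁ φs₂ : Fin n → ℝ → ℝ),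
        ((∀ i, 0 < ℓs₁ i) ∧ (∑ i, ℓs₁ i) = ℓ ∧ (∀ i, IsMFun (ℓs₁ i) (ℓ's i) (φs₁ i)) ∧
          IsTensorDecomp φ ℓs₁ ℓ's φs₁) →
        ((∀ i, 0 < ℓs₂ i) ∧ (∑ i, ℓs₂ i) = ℓ ∧ (∀ i, IsMFun (ℓs₂ i) (ℓ's i) (φs₂ i)) ∧
          IsTensorDecomp φ ℓs₂ ℓ's φs₂) →
        ℓs₁ = ℓs₂ ∧ ∀ i, EqOn (φs₁ i) (φs₂ i) (Icc 0 (ℓs₁ i))) ∧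
      (∀ (ℓs : Fin n → ℝ) (φs : Fin n → ℝ → ℝ),
        ((∀ i, 0 < ℓs i) ∧ (∑ i, ℓs i) = ℓ ∧ (∀ i, IsMFun (ℓs i) (ℓ's i) (φs i)) ∧
          IsTensorDecomp φ ℓs ℓ's φs) →
        ∀ i, InjOn (φs i) (Icc 0 (ℓs i)))) := by
  refine ⟨?_, fun hinj => ⟨?_, ?_⟩⟩
  · obtain ⟨ℓs, φs, h⟩ := hφ.exists_isFactorization hℓ' hpos hsum
    exact ⟨ℓs, φs, h.pos, h.sum_eq, h.isMFun, h.isTensorDecomp⟩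
  · rintro ℓs₁ ℓs₂ φs₁ φs₂ ⟨pos₁, sum₁, isMFun₁, decomp₁⟩ ⟨pos₂, sum₂, isMFun₂, decomp₂⟩
    exact IsFactorization.unique hinj (fun i => (hpos i).le)
      ⟨pos₁, sum₁, isMFun₁, decomp₁⟩ ⟨pos₂, sum₂, isMFun₂, decomp₂⟩
  · rintro ℓs φs ⟨pos, sum_eq, isMFun, decomp⟩
    exact IsFactorization.injOn hinj ⟨pos, sum_eq, isMFun, decomp⟩
end

section
/- Let ℓ > 0 and let u, v ∈ M(1, ℓ), i.e., u and v are continuous nondecreasing surjective maps from [0,1] to [0,ℓ]. Then there exist φ_u, φ_v ∈ M(1,1) such that u ∘ φ_u = v ∘ φ_v. -/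
/-! Look for the pair `(φ_u t, φ_v t)` on the antidiagonal `x + y = 2 * t` of the unit square.
As `x` grows, `u x` is nondecreasing and `v y` nonincreasing, so they agree along a segment; take
its point with greatest `x`. Both coordinates are then nondecreasing in `t`, and since their sum is
`2 * t`, neither can jump. -/

open Set unitInterval

theorem map_eq_map_of_isBot {β γ : Type*} [Preorder β] [PartialOrder γ] {f g : β → γ} {a : β}
    (hf : Monotone f) (hfs : f.Surjective) (hg : Monotone g) (hgs : g.Surjective)
    (ha : IsBot a) : f a = g a := by
  have isBot_map {h : β → γ} (hh : Monotone h) (hhs : h.Surjective) : IsBot (h a) :=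
    hhs.forall.2 fun x ↦ hh (ha x)
  exact le_antisymm (isBot_map hf hfs _) (isBot_map hg hgs _)

theorem map_eq_map_of_isTop {β γ : Type*} [Preorder β] [PartialOrder γ] {f g : β → γ} {a : β}
    (hf : Monotone f) (hfs : f.Surjective) (hg : Monotone g) (hgs : g.Surjective)
    (ha : IsTop a) : f a = g a :=
  map_eq_map_of_isBot (β := βᵒᵈ) (γ := γᵒᵈ) hf.dual hfs hg.dual hgs ha

theorem continuous_of_monotone_of_continuous_add {β : Type*} [LinearOrder β] [TopologicalSpace β]
    {f g : β → ℝ} (hf : Monotone f) (hg : Monotone g) (hfg : Continuous fun t ↦ f t + g t) :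
    Continuous f := by
  have dist_le (s t : β) : dist (f s) (f t) ≤ dist (f s + g s) (f t + g t) := by
    rw [Real.dist_eq, Real.dist_eq, add_sub_add_comm]
    rcases le_total s t with hst | hts
    · exact abs_le_abs_of_nonpos (sub_nonpos.2 (hf hst)) (by linarith [hg hst])
    · exact abs_le_abs_of_nonneg (sub_nonneg.2 (hf hts)) (by linarith [hg hts])
  refine continuous_iff_continuousAt.2 fun t ↦ tendsto_iff_dist_tendsto_zero.2 ?_
  exact squeeze_zero (fun _ ↦ dist_nonneg) (fun s ↦ dist_le s t)
    (tendsto_iff_dist_tendsto_zero.1 hfg.continuousAt)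

theorem exists_isGreatest_setOf_le_and_eq {β γ : Type*} [ConditionallyCompleteLinearOrder β]
    [TopologicalSpace β] [OrderTopology β] [DenselyOrdered β] [LinearOrder γ]
    [TopologicalSpace γ] [OrderClosedTopology γ] {f g : β → γ} {a b : β} (hab : a ≤ b)
    (hf : ContinuousOn f (Icc a b)) (hg : ContinuousOn g (Icc a b)) (ha : f a ≤ g a)
    (hb : g b ≤ f b) :
    ∃ c, IsGreatest {x ∈ Icc a b | f x ≤ g x} c ∧ f c = g c := by
  have compact : IsCompact {x ∈ Icc a b | f x ≤ g x} :=
    isCompact_Icc.of_isClosed_subset (isClosed_Icc.isClosed_le hf hg) (sep_subset _ _)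
  obtain ⟨c, ⟨⟨hac, hcb⟩, hc⟩, c_max⟩ := compact.exists_isGreatest ⟨a, left_mem_Icc.2 hab, ha⟩
  refine ⟨c, ⟨⟨⟨hac, hcb⟩, hc⟩, c_max⟩, ?_⟩
  obtain ⟨z, ⟨hcz, hzb⟩, hz⟩ := isPreconnected_Icc.intermediate_value₂ (left_mem_Icc.2 hcb)
    (right_mem_Icc.2 hcb) (hf.mono (Icc_subset_Icc_left hac)) (hg.mono (Icc_subset_Icc_left hac))
    hc hb
  have z_eq : z = c := le_antisymm (c_max ⟨⟨hac.trans hcz, hzb⟩, hz.le⟩) hcz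
  exact z_eq ▸ hz

section CrossingSet

variable {α : Type*} [Preorder α] {f g : ℝ → α} {s t x y : ℝ}

/-- The first coordinates `x` of the points of the antidiagonal `x + y = s` of the unit square at
which `f x ≤ g y`; its greatest element is where `f x` and `g y` cross. The bounds on `x` say that
both `x` and `s - x` lie in `[0, 1]`. -/
def crossingSet (f g : ℝ → α) (s : ℝ) : Set ℝ :=
  {x ∈ Icc (max 0 (s - 1)) (min 1 s) | f x ≤ g (s - x)}

theorem mem_crossingSet :
    x ∈ crossingSet f g s ↔ x ∈ Icc 0 1 ∧ s - x ∈ Icc 0 1 ∧ f x ≤ g (s - x) := by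
  simp only [crossingSet, mem_ofPred_eq, mem_Icc, max_le_iff, le_min_iff, sub_nonneg,
    sub_le_comm (b := x)]
  tauto

theorem le_of_isGreatest_crossingSet (hg : Monotone g) (hx : IsGreatest (crossingSet f g s) x)
    (hy : IsGreatest (crossingSet f g t) y) (hst : s ≤ t) : x ≤ y := by
  obtain ⟨hxI, ⟨hsx, -⟩, hle⟩ := mem_crossingSet.1 hx.1
  obtain ⟨-, ⟨-, hty⟩, -⟩ := mem_crossingSet.1 hy.1
  rcases le_total (t - x) 1 with htx | htx
  · exact hy.2 (mem_crossingSet.2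
      ⟨hxI, ⟨by linarith, htx⟩, hle.trans (hg (sub_le_sub_right hst x))⟩)
  · linarith

theorem sub_le_sub_of_isGreatest_crossingSet (hf : Monotone f)
    (hx : IsGreatest (crossingSet f g s) x) (hy : IsGreatest (crossingSet f g t) y)
    (hst : s ≤ t) : s - x ≤ t - y := by
  obtain ⟨⟨hx0, -⟩, -, -⟩ := mem_crossingSet.1 hx.1
  obtain ⟨⟨-, hy1⟩, htyI, hle⟩ := mem_crossingSet.1 hy.1
  by_contra! hlt
  -- Slide `(y, t - y)` horizontally onto the antidiagonal of `s`; this only lowers `f`.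
  have second_eq : s - (y - (t - s)) = t - y := by ring
  have slide_mem : y - (t - s) ∈ crossingSet f g s := by
    rw [mem_crossingSet, second_eq]
    exact ⟨⟨by linarith, by linarith⟩, htyI, (hf (by linarith)).trans hle⟩
  linarith [hx.2 slide_mem]

end CrossingSet

theorem exists_isGreatest_crossingSet_and_eq {α : Type*} [LinearOrder α] [TopologicalSpace α]
    [OrderClosedTopology α] {f g : ℝ → α} {s : ℝ} (hf : Monotone f) (hfc : Continuous f)
    (hg : Monotone g) (hgc : Continuous g) (h0 : f 0 = g 0) (h1 : f 1 = g 1)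
    (hs : s ∈ Icc 0 2) :
    ∃ x, IsGreatest (crossingSet f g s) x ∧ f x = g (s - x) := by
  obtain ⟨hs0, hs2⟩ := hs
  refine exists_isGreatest_setOf_le_and_eq ?_ hfc.continuousOn (by fun_prop) ?_ ?_
  · exact max_le (le_min zero_le_one hs0) (le_min (by linarith) (by linarith))
  · rcases le_total s 1 with h | h
    · rw [max_eq_left (sub_nonpos.2 h), h0]
      exact hg (by linarith)
    · rw [max_eq_right (sub_nonneg.2 h), sub_sub_cancel, ← h1]
      exact hf (by linarith)
  · rcases le_total s 1 with h | h
    · rw [min_eq_right h, sub_self, ← h0]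
      exact hf hs0
    · rw [min_eq_left h, h1]
      exact hg (by linarith)

theorem surjective_of_add_eq_two_mul {φ ψ : I → I} (hφ : Continuous φ)
    (h : ∀ t, (φ t + ψ t : ℝ) = 2 * t) : φ.Surjective := by
  have sum_zero : (φ 0 + ψ 0 : ℝ) = 0 := by simpa using h 0
  have sum_one : (φ 1 + ψ 1 : ℝ) = 2 := by simpa using h 1
  have map_zero : φ 0 = 0 := le_antisymm (Subtype.coe_le_coe.1 (by
    rw [Icc.coe_zero]; linarith [(ψ 0).2.1])) nonneg'
  have map_one : φ 1 = 1 := le_antisymm le_one' (Subtype.coe_le_coe.1 (by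
    rw [Icc.coe_one]; linarith [(ψ 1).2.2]))
  intro y
  refine intermediate_value_univ 0 1 hφ ?_
  rw [map_zero, map_one]
  exact ⟨nonneg', le_one'⟩

theorem continuous_of_monotone_of_add_eq_two_mul {φ ψ : I → I} (hφ : Monotone φ)
    (hψ : Monotone ψ) (h : ∀ t, (φ t + ψ t : ℝ) = 2 * t) : Continuous φ := by
  refine Continuous.subtype_mk (continuous_of_monotone_of_continuous_add
    (f := fun t ↦ (φ t : ℝ)) (g := fun t ↦ (ψ t : ℝ)) hφ hψ ?_) _
  simp only [h]
  fun_prop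

theorem exists_monotone_add_eq_two_mul_and_comp_eq {α : Type*} [LinearOrder α]
    [TopologicalSpace α] [OrderClosedTopology α] (u v : C(I, α)) (hu : Monotone u)
    (hv : Monotone v) (h0 : u 0 = v 0) (h1 : u 1 = v 1) :
    ∃ φ ψ : I → I, Monotone φ ∧ Monotone ψ ∧ (∀ t, (φ t + ψ t : ℝ) = 2 * t) ∧
      ∀ t, u (φ t) = v (ψ t) := by
  let f : ℝ → α := IccExtend zero_le_one u
  let g : ℝ → α := IccExtend zero_le_one v
  have hf : Monotone f := hu.IccExtend zero_le_one
  have hg : Monotone g := hv.IccExtend zero_le_one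
  have crossing (t : I) : ∃ x, IsGreatest (crossingSet f g (2 * t)) x ∧ f x = g (2 * t - x) :=
    exists_isGreatest_crossingSet_and_eq hf u.continuous.Icc_extend' hg v.continuous.Icc_extend'
      (by simpa [f, g] using h0) (by simpa [f, g] using h1)
      ⟨by linarith [t.2.1], by linarith [t.2.2]⟩
  choose x x_greatest x_eq using crossing
  have x_mem (t : I) := mem_crossingSet.1 (x_greatest t).1
  have two_mul_mono {s t : I} (hst : s ≤ t) : 2 * (s : ℝ) ≤ 2 * t :=
    mul_le_mul_of_nonneg_left hst zero_le_two
  refine ⟨fun t ↦ ⟨x t, (x_mem t).1⟩, fun t ↦ ⟨2 * t - x t, (x_mem t).2.1⟩,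
    fun s t hst ↦ ?_, fun s t hst ↦ ?_, fun t ↦ add_sub_cancel _ _, fun t ↦ ?_⟩
  · exact le_of_isGreatest_crossingSet hg (x_greatest s) (x_greatest t) (two_mul_mono hst)
  · exact sub_le_sub_of_isGreatest_crossingSet hf (x_greatest s) (x_greatest t) (two_mul_mono hst)
  · rw [← IccExtend_of_mem zero_le_one u, ← IccExtend_of_mem zero_le_one v]
    exact x_eq t

theorem stmt5_general {α : Type*} [LinearOrder α] [TopologicalSpace α] [OrderClosedTopology α]
    (u v : C(I, α)) (hu : Monotone u) (hv : Monotone v) (h0 : u 0 = v 0) (h1 : u 1 = v 1) :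
    ∃ φu φv : C(I, I), Monotone φu ∧ Function.Surjective φu ∧
      Monotone φv ∧ Function.Surjective φv ∧ u.comp φu = v.comp φv := by
  obtain ⟨φ, ψ, hφ, hψ, add_eq, comp_eq⟩ :=
    exists_monotone_add_eq_two_mul_and_comp_eq u v hu hv h0 h1
  have add_eq' (t : I) : (ψ t + φ t : ℝ) = 2 * t := by rw [add_comm, add_eq]
  have φ_cont : Continuous φ := continuous_of_monotone_of_add_eq_two_mul hφ hψ add_eq
  have ψ_cont : Continuous ψ := continuous_of_monotone_of_add_eq_two_mul hψ hφ add_eq'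
  exact ⟨⟨φ, φ_cont⟩, ⟨ψ, ψ_cont⟩, hφ, surjective_of_add_eq_two_mul φ_cont add_eq,
    hψ, surjective_of_add_eq_two_mul ψ_cont add_eq', ContinuousMap.ext comp_eq⟩

/-- Let `ℓ > 0` and let `u, v ∈ M(1, ℓ)`, i.e. continuous nondecreasing surjective maps from
`[0,1]` to `[0,ℓ]`. Then there exist `φ_u, φ_v ∈ M(1,1)` with `u ∘ φ_u = v ∘ φ_v`. -/
theorem stmt5 (ℓ : ℝ) (hℓ : 0 < ℓ)
    (u v : C(Set.Icc (0:ℝ) 1, Set.Icc (0:ℝ) ℓ))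
    (hum : Monotone u) (hus : Function.Surjective u)
    (hvm : Monotone v) (hvs : Function.Surjective v) :
    ∃ φu φv : C(Set.Icc (0:ℝ) 1, Set.Icc (0:ℝ) 1),
      Monotone φu ∧ Function.Surjective φu ∧
      Monotone φv ∧ Function.Surjective φv ∧
      u.comp φu = v.comp φv :=
  stmt5_general u v hum hvm (map_eq_map_of_isBot hum hus hvm hvs fun _ ↦ nonneg')
    (map_eq_map_of_isTop hum hus hvm hvs fun _ ↦ le_one')
end

section
/- Let M be the category whose objects are the real numbers ℓ > 0 and whose morphisms from ℓ to ℓ' are the continuous nondecreasing surjective maps [0,ℓ] → [0,ℓ'], with composition given by composition of functions. Then the inclusion functor into M^op of the full subcategory of M^op spanned by the single object 1 is a final functor; equivalently, for every ℓ > 0 the comma category of objects of this subcategory under ℓ is nonempty and connected, i.e., M(1, ℓ) is nonempty and any two elements u, v ∈ M(1, ℓ) are connected by a finite zigzag of precompositions by elements of M(1,1). -/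
/-- Composition of morphisms of the category `M`. -/
def MSp.comp {ℓ₁ ℓ₂ ℓ₃ : ℝ} (g : MSp ℓ₂ ℓ₃) (f : MSp ℓ₁ ℓ₂) : MSp ℓ₁ ℓ₃ :=
  ⟨g.1.comp f.1, by
    constructor
    · rw [ContinuousMap.coe_comp]
      exact g.2.1.comp f.2.1
    · rw [ContinuousMap.coe_comp]
      exact g.2.2.comp f.2.2⟩

/-!
Any two objects of `M` are isomorphic, by linear rescaling. Hence `M(a, b)` contains an invertible
element `w`, and every `v ∈ M(a, b)` is the precomposition `w ∘ (w⁻¹ ∘ v)` of `w` by an element of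
`M(a, a)`; so any two elements of `M(a, b)` are joined by a zigzag of length two through `w`.
-/

/-- The linear rescaling `x ↦ (b / a) * x` as an order isomorphism `[0, a] ≃o [0, b]`,
the source of the isomorphism between any two objects of the category `M`. -/
noncomputable def iccScaleOrderIso {K : Type*} [Field K] [LinearOrder K] [IsStrictOrderedRing K]
    {a b : K} (ha : 0 < a) (hb : 0 < b) : Set.Icc 0 a ≃o Set.Icc 0 b :=
  ((OrderIso.mulLeft₀ (b / a) (div_pos hb ha)).Icc 0 a).trans <|
    OrderIso.setCongr _ _ <| by
      simp only [OrderIso.mulLeft₀_apply, mul_zero, div_mul_cancel₀ b ha.ne']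

namespace MSp

variable {a b c : ℝ}

/-- An order isomorphism `[0, a] ≃o [0, b]` as a morphism `a ⟶ b` of the category `M`; continuity is
automatic because the intervals carry the order topology. -/
def ofOrderIso (e : Set.Icc 0 a ≃o Set.Icc 0 b) : MSp a b :=
  ⟨⟨e, e.continuous⟩, e.monotone, e.surjective⟩

theorem ofOrderIso_comp_symm_comp (e : Set.Icc 0 a ≃o Set.Icc 0 b) (v : MSp c b) :
    (ofOrderIso e).comp ((ofOrderIso e.symm).comp v) = v :=
  Subtype.ext <| ContinuousMap.ext fun t => e.apply_symm_apply (v.1 t)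

end MSp

theorem stmt6_general (a b : ℝ) (ha : 0 < a) (hb : 0 < b) :
    Nonempty (MSp a b) ∧
      ∀ u v : MSp a b,
        Relation.EqvGen (fun u v : MSp a b => ∃ φ : MSp a a, v = u.comp φ) u v := by
  let e : Set.Icc 0 a ≃o Set.Icc 0 b := iccScaleOrderIso ha hb
  let w : MSp a b := .ofOrderIso e
  have w_rel (v : MSp a b) : ∃ φ : MSp a a, v = w.comp φ :=
    ⟨(MSp.ofOrderIso e.symm).comp v, (MSp.ofOrderIso_comp_symm_comp e v).symm⟩
  exact ⟨⟨w⟩, fun u v => .trans _ w _ (.symm _ _ (.rel _ _ (w_rel u))) (.rel _ _ (w_rel v))⟩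

/-- The full subcategory of `M^op` spanned by the object `1` is final in `M^op`; equivalently,
for every `ℓ > 0`, the relevant comma category is nonempty and connected, i.e. `M(1, ℓ)` is
nonempty and any two elements `u, v ∈ M(1, ℓ)` are connected by a finite zigzag of
precompositions by elements of `M(1,1)` (i.e. they are related by the equivalence relation
generated by `u ~ u ∘ φ` for `φ ∈ M(1,1)`). -/
theorem stmt6 (ℓ : ℝ) (hℓ : 0 < ℓ) :
    Nonempty (MSp 1 ℓ) ∧
      ∀ u v : MSp 1 ℓ,
        Relation.EqvGen (fun u v : MSp 1 ℓ => ∃ φ : MSp 1 1, v = u.comp φ) u v :=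
  stmt6_general 1 ℓ one_pos hℓ
end

section
/- Let X be a Hausdorff topological space, let L > 0, and let γ : [0, L] → X be a continuous map which is not constant on any nondegenerate subinterval of [0, L] (i.e., γ is a regular path). Let ℓ > 0 and let η₁, η₂ : [0, ℓ] → [0, L] be continuous nondecreasing surjective maps such that γ ∘ η₁ = γ ∘ η₂. Then η₁ = η₂. -/
/-!
A section `σ` of `η₁` is monotone, so `g = η₂ ∘ σ` is a monotone self-map of the parameter space
with `γ ∘ g = γ`. Suppose `a < g a`, and let `b` be the least fixed point of `g` above `a`, which
exists by Knaster–Tarski. Every `x ∈ [a, b)` is moved by `g` to a strictly larger point of `[a, b]`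
with the same value of `γ`; as the fibres of `γ` are closed, `γ x = γ b` by continuous induction.
So `γ` is constant on `[a, b]`, against regularity. With the order-dual argument this gives
`g = id`, and since `σ` may be chosen to pass through any prescribed point, `η₁ = η₂`.
-/

open Function OrderDual Set

section RightInverse

variable {α β : Type*}

theorem exists_rightInverse_apply_eq {f : α → β} (hf : Surjective f) (a : α) :
    ∃ σ : β → α, RightInverse σ f ∧ σ (f a) = a := by
  classical
  refine ⟨update (surjInv hf) (f a) a, fun y ↦ ?_, update_self ..⟩
  obtain rfl | hy := eq_or_ne y (f a)
  · rw [update_self]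
  · rw [update_of_ne hy, surjInv_eq hf]

theorem strictMono_of_rightInverse [LinearOrder α] [Preorder β] {f : α → β} {σ : β → α}
    (hf : Monotone f) (hσ : RightInverse σ f) : StrictMono σ := fun x y hxy ↦
  hf.reflect_lt <| by rwa [hσ x, hσ y]

end RightInverse

theorem nextFixed_le_of_map_le {α : Type*} [CompleteLattice α] (f : α →o α) {x y : α}
    (hx : x ≤ f x) (hxy : x ≤ y) (hy : f y ≤ y) : (f.nextFixed x hx : α) ≤ y :=
  OrderHom.lfp_le _ <| sup_le hxy hy

section Fibres

variable {α X : Type*} [TopologicalSpace α] [TopologicalSpace X] [T1Space X]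

theorem eq_right_of_forall_exists_mem_Ioc [ConditionallyCompleteLinearOrder α] [OrderTopology α]
    {γ : α → X} {a b : α} (hγ : ContinuousOn γ (Icc a b)) (hab : a ≤ b)
    (h : ∀ x ∈ Ico a b, ∃ y ∈ Ioc x b, γ y = γ x) : γ a = γ b := by
  have hclosed : IsClosed (γ ⁻¹' {γ a} ∩ Icc a b) := by
    rw [inter_comm]
    exact hγ.preimage_isClosed_of_isClosed isClosed_Icc isClosed_singleton
  have hb : b ∈ γ ⁻¹' {γ a} := hclosed.mem_of_ge_of_forall_exists_gt rfl hab fun x hx ↦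
    let ⟨y, hy, hyx⟩ := h x hx.2
    ⟨y, hyx.trans hx.1, hy⟩
  exact hb.symm

theorem eq_apply_nextFixed_of_comp_eq [CompleteLinearOrder α] [OrderTopology α] {γ : α → X}
    (hγ : Continuous γ) (g : α →o α) (hg : γ ∘ g = γ) {a : α} (ha : a ≤ g a) {x : α}
    (hx : x ∈ Icc a (g.nextFixed a ha)) : γ x = γ (g.nextFixed a ha) := by
  refine eq_right_of_forall_exists_mem_Ioc hγ.continuousOn hx.2 fun y hy ↦
    ⟨g y, ⟨?_, ?_⟩, congrFun hg y⟩
  · by_contra! hgy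
    exact hy.2.not_ge <| nextFixed_le_of_map_le g ha (hx.1.trans hy.1) hgy
  · calc
      g y ≤ g (g.nextFixed a ha) := g.monotone hy.2.le
      _ = g.nextFixed a ha := (g.nextFixed a ha).2

end Fibres

/-- A regular path: a map not constant on any nondegenerate interval, which is what makes its
reparametrizations unique. The parameter space is any preorder, so that the notion is available on
order duals, and continuity is kept as a separate hypothesis. -/
def IsRegularPath {α X : Type*} [Preorder α] (γ : α → X) : Prop :=
  ∀ a b : α, a < b → ¬ (∀ s ∈ Icc a b, ∀ t ∈ Icc a b, γ s = γ t)

namespace IsRegularPath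

variable {α X : Type*} {γ : α → X}

theorem comp_ofDual [Preorder α] (hreg : IsRegularPath γ) :
    IsRegularPath (γ ∘ (ofDual : αᵒᵈ → α)) := fun a b hab hconst ↦
  hreg (ofDual b) (ofDual a) hab fun s hs t ht ↦
    hconst (toDual s) ⟨hs.2, hs.1⟩ (toDual t) ⟨ht.2, ht.1⟩

variable [CompleteLinearOrder α] [TopologicalSpace α] [OrderTopology α]
  [TopologicalSpace X] [T1Space X]

theorem apply_le_of_comp_eq (hreg : IsRegularPath γ) (hγ : Continuous γ) {g : α → α}
    (hg : Monotone g) (hcomp : γ ∘ g = γ) (a : α) : g a ≤ a := by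
  by_contra! ha
  let f : α →o α := ⟨g, hg⟩
  have hlt : a < f.nextFixed a ha.le := calc
    a < f a := ha
    _ ≤ f (f.nextFixed a ha.le) := f.monotone (f.le_nextFixed ha.le)
    _ = f.nextFixed a ha.le := (f.nextFixed a ha.le).2
  exact hreg _ _ hlt fun s hs t ht ↦
    (eq_apply_nextFixed_of_comp_eq hγ f hcomp ha.le hs).trans
      (eq_apply_nextFixed_of_comp_eq hγ f hcomp ha.le ht).symm

theorem eq_id_of_comp_eq (hreg : IsRegularPath γ) (hγ : Continuous γ) {g : α → α}
    (hg : Monotone g) (hcomp : γ ∘ g = γ) : g = id :=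
  funext fun a ↦ le_antisymm (hreg.apply_le_of_comp_eq hγ hg hcomp a) <|
    hreg.comp_ofDual.apply_le_of_comp_eq (g := toDual ∘ g ∘ ofDual)
      (hγ.comp continuous_ofDual) hg.dual (congrArg (· ∘ ofDual) hcomp) (toDual a)

end IsRegularPath

theorem stmt7_general {ι α X : Type*} [LinearOrder ι] [CompleteLinearOrder α] [TopologicalSpace α]
    [OrderTopology α] [TopologicalSpace X] [T1Space X] {γ : α → X} (hreg : IsRegularPath γ)
    (hγ : Continuous γ) {η₁ η₂ : ι → α} (h₁m : Monotone η₁) (h₁s : Surjective η₁)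
    (h₂m : Monotone η₂) (hcomp : γ ∘ η₁ = γ ∘ η₂) : η₁ = η₂ := by
  ext t
  obtain ⟨σ, hσ, hσt⟩ := exists_rightInverse_apply_eq h₁s t
  have hmono : Monotone (η₂ ∘ σ) := h₂m.comp (strictMono_of_rightInverse h₁m hσ).monotone
  have hfix : γ ∘ (η₂ ∘ σ) = γ := by
    rw [← comp_assoc, ← hcomp, comp_assoc, hσ.comp_eq_id, comp_id]
  calc
    η₁ t = (η₂ ∘ σ) (η₁ t) := by rw [hreg.eq_id_of_comp_eq hγ hmono hfix, id]
    _ = η₂ t := by rw [comp_apply, hσt]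

/-- Let `X` be Hausdorff, `L > 0`, and `γ : [0, L] → X` a continuous map which is regular,
i.e. not constant on any nondegenerate subinterval of `[0, L]`. If `η₁, η₂ : [0, ℓ] → [0, L]`
are continuous nondecreasing surjective maps with `γ ∘ η₁ = γ ∘ η₂`, then `η₁ = η₂`. -/
theorem stmt7 {X : Type*} [TopologicalSpace X] [T2Space X]
    (L : ℝ) (hL : 0 < L) (γ : C(Set.Icc (0:ℝ) L, X))
    (hreg : ∀ a b : Set.Icc (0:ℝ) L, a < b →
      ¬ (∀ s ∈ Set.Icc a b, ∀ t ∈ Set.Icc a b, γ s = γ t))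
    (ℓ : ℝ) (hℓ : 0 < ℓ)
    (η₁ η₂ : C(Set.Icc (0:ℝ) ℓ, Set.Icc (0:ℝ) L))
    (h₁m : Monotone η₁) (h₁s : Function.Surjective η₁)
    (h₂m : Monotone η₂) (h₂s : Function.Surjective η₂)
    (hcomp : γ.comp η₁ = γ.comp η₂) :
    η₁ = η₂ := by
  have : Fact (0 ≤ L) := ⟨hL.le⟩
  exact DFunLike.coe_injective <|
    stmt7_general hreg γ.continuous h₁m h₁s h₂m (congrArg DFunLike.coe hcomp)
end

section
/- Let X be a topological space and let P be a set of continuous maps [0,1] → X such that: (i) for every γ ∈ P and every φ ∈ M(1,1), the composite γ ∘ φ belongs to P; (ii) for all γ₁, γ₂ ∈ P with γ₁(1) = γ₂(0), the normalized composition γ₁ *_N γ₂ belongs to P. Define P̂ = { γ ∈ C([0,1], X) : there exists φ ∈ M(1,1) with γ ∘ φ ∈ P }. Then P ⊆ P̂, and P̂ again satisfies properties (i) and (ii): it is closed under precomposition by elements of M(1,1) and under normalized composition of composable pairs. -/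
open unitInterval

/-- The normalized composition `γ₁ *_N γ₂` of two continuous maps `γ₁ γ₂ : [0,1] → X` with
`γ₁ 1 = γ₂ 0`, given by `t ↦ γ₁ (2t)` on `[0, 1/2]` and `t ↦ γ₂ (2t − 1)` on `[1/2, 1]`. -/
noncomputable def normComp {X : Type*} [TopologicalSpace X] (γ₁ γ₂ : C(unitInterval, X))
    (h : γ₁ 1 = γ₂ 0) : C(unitInterval, X) :=
  ((Path.mk γ₁ rfl rfl : Path (γ₁ 0) (γ₁ 1)).trans
    ((Path.mk γ₂ rfl rfl : Path (γ₂ 0) (γ₂ 1)).cast h rfl)).toContinuousMap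

/-- `P̂` : the set of continuous maps `γ : [0,1] → X` admitting a reparametrization
`φ ∈ M(1,1)` with `γ ∘ φ ∈ P`. -/
def satur {X : Type*} [TopologicalSpace X] (P : Set C(unitInterval, X)) :
    Set C(unitInterval, X) :=
  {γ | ∃ φ : C(unitInterval, unitInterval),
    Monotone φ ∧ Function.Surjective φ ∧ γ.comp φ ∈ P}

/-!
Two reparametrizations `φ`, `ψ` always have a common refinement `φ ∘ α = ψ ∘ β`. Extend both to the
line by the identity outside `[0,1]`; among the solutions of `φ x = ψ y` on the antidiagonal
`x + y = c`, choose the one with the largest `x`. As `c` grows, both coordinates are nondecreasing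
with sum `c`, hence `1`-Lipschitz, and `c ↦ (x, y)` runs from `(0, 0)` at `c = 0` to `(1, 1)` at
`c = 2`. This refinement gives closure under `γ ↦ γ ∘ φ`. For the normalized composition,
reparametrize each half of `[0,1]` separately.
-/

open Set Filter

section BalancePoint

/-- The largest `x` with `f x ≤ g (c - x)`. For continuous nondecreasing `f` and `g`, the pair
`(x, c - x)` is the rightmost point of the antidiagonal of sum `c` on the curve `f x = g y`.
Junk value of `sSup` if there is no such `x` or if they are unbounded. -/
noncomputable def balancePoint {R : Type*} [LE R] (f g : ℝ → R) (c : ℝ) : ℝ :=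
  sSup {x | f x ≤ g (c - x)}

variable {R : Type*} [LinearOrder R] [NoMaxOrder R] [TopologicalSpace R] [OrderClosedTopology R]
  {f g : ℝ → R}

lemma isGreatest_balancePoint (hf : Continuous f) (hg : Continuous g) (hgm : Monotone g)
    (hbot : Tendsto f atBot atBot) (htop : Tendsto f atTop atTop) (c : ℝ) :
    IsGreatest {x | f x ≤ g (c - x)} (balancePoint f g c) := by
  have closed : IsClosed {x | f x ≤ g (c - x)} := isClosed_le hf (by fun_prop)
  refine closed.isGreatest_csSup ?nonempty ?bddAbove
  case nonempty =>
    obtain ⟨x, hx, hx0⟩ :=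
      ((hbot.eventually_le_atBot (g c)).and (eventually_le_atBot 0)).exists
    exact ⟨x, hx.trans (hgm (by linarith))⟩
  case bddAbove =>
    obtain ⟨b, hb⟩ := eventually_atTop.1 (htop.eventually_gt_atTop (g c))
    refine ⟨max b 0, fun x hx => ?_⟩
    by_contra! hlt
    have hgx : g (c - x) ≤ g c := hgm (by linarith [le_max_right b 0])
    exact (hb x ((le_max_left b 0).trans hlt.le)).not_ge (hx.trans hgx)

lemma monotone_balancePoint (hf : Continuous f) (hg : Continuous g) (hgm : Monotone g)
    (hbot : Tendsto f atBot atBot) (htop : Tendsto f atTop atTop) :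
    Monotone (balancePoint f g) := by
  intro c d hcd
  have greatest := isGreatest_balancePoint hf hg hgm hbot htop
  exact (greatest d).2 ((greatest c).1.trans (hgm (by linarith)))

lemma monotone_sub_balancePoint (hf : Continuous f) (hg : Continuous g) (hfm : Monotone f)
    (hgm : Monotone g) (hbot : Tendsto f atBot atBot) (htop : Tendsto f atTop atTop) :
    Monotone fun c => c - balancePoint f g c := by
  intro c d hcd
  have greatest := isGreatest_balancePoint hf hg hgm hbot htop
  have mem : balancePoint f g d - (d - c) ∈ {x | f x ≤ g (c - x)} :=
    (hfm (by linarith)).trans ((greatest d).1.trans (hgm (by linarith)))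
  linarith [(greatest c).2 mem]

lemma apply_balancePoint (hf : Continuous f) (hg : Continuous g) (hgm : Monotone g)
    (hbot : Tendsto f atBot atBot) (htop : Tendsto f atTop atTop) (c : ℝ) :
    f (balancePoint f g c) = g (c - balancePoint f g c) := by
  have greatest := isGreatest_balancePoint hf hg hgm hbot htop c
  have closed : IsClosed {x | g (c - x) ≤ f x} := isClosed_le (by fun_prop) hf
  have above : Ioi (balancePoint f g c) ⊆ {x | g (c - x) ≤ f x} := fun x hx =>
    (not_le.1 fun hle => (greatest.2 hle).not_gt hx).le
  have closure_above := closure_minimal above closed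
  rw [closure_Ioi] at closure_above
  exact le_antisymm greatest.1 (closure_above self_mem_Ici)

end BalancePoint

lemma lipschitzWith_one_of_monotone_of_monotone_sub {s : ℝ → ℝ} (hs : Monotone s)
    (hsub : Monotone fun c => c - s c) : LipschitzWith 1 s := by
  refine LipschitzWith.of_le_add fun x y => ?_
  rw [Real.dist_eq]
  rcases le_total x y with hxy | hyx
  · linarith [hs hxy, abs_nonneg (x - y)]
  · have : y - s y ≤ x - s x := hsub hyx
    linarith [le_abs_self (x - y)]

/-- Membership in `M(1,1)`; continuity is carried by the bundled map. -/
structure IsReparam (φ : C(I, I)) : Prop where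
  monotone : Monotone φ
  surjective : Function.Surjective φ

namespace IsReparam

variable {φ : C(I, I)}

lemma map_zero (hφ : IsReparam φ) : φ 0 = 0 := by
  obtain ⟨x, hx⟩ := hφ.surjective 0
  exact le_antisymm ((hφ.monotone unitInterval.nonneg').trans hx.le) unitInterval.nonneg'

lemma map_one (hφ : IsReparam φ) : φ 1 = 1 := by
  obtain ⟨x, hx⟩ := hφ.surjective 1
  exact le_antisymm unitInterval.le_one' (hx.ge.trans (hφ.monotone unitInterval.le_one'))

lemma of_map_zero_of_map_one (hφ : Monotone φ) (h0 : φ 0 = 0) (h1 : φ 1 = 1) :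
    IsReparam φ := by
  refine ⟨hφ, fun y => ?_⟩
  have ivt := intermediate_value_univ 0 1 φ.continuous
  rw [h0, h1] at ivt
  exact ivt ⟨unitInterval.nonneg', unitInterval.le_one'⟩

end IsReparam

lemma exists_isReparam_eq_projIcc {s : ℝ → ℝ} (hs : Continuous s) (hsm : Monotone s) {b : ℝ}
    (hb : 0 ≤ b) (hs0 : s 0 ≤ 0) (hsb : 1 ≤ s b) :
    ∃ α : C(I, I), IsReparam α ∧ ∀ u : I, α u = projIcc 0 1 zero_le_one (s (b * u)) := by
  let α : C(I, I) :=
    ⟨fun u => projIcc 0 1 zero_le_one (s (b * u)), continuous_projIcc.comp (by fun_prop)⟩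
  refine ⟨α, .of_map_zero_of_map_one ?monotone ?zero ?one, fun u => rfl⟩
  case monotone =>
    exact fun u v huv => monotone_projIcc zero_le_one (hsm (mul_le_mul_of_nonneg_left huv hb))
  case zero => simpa [α, projIcc_eq_zero] using hs0
  case one => simpa [α, projIcc_eq_one] using hsb

section ExtendLine

variable {φ : C(I, I)}

/-- The extension of `φ` to the line by unit-slope rays. When `φ` fixes `0` and `1`, it is the
identity outside `[0,1]`; unlike the constant extension `Set.IccExtend` it is unbounded in both
directions. -/
noncomputable def extendLine (φ : C(I, I)) (x : ℝ) : ℝ :=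
  φ (projIcc 0 1 zero_le_one x) + (x - projIcc 0 1 zero_le_one x)

lemma continuous_extendLine (φ : C(I, I)) : Continuous (extendLine φ) := by
  have : Continuous (projIcc (0 : ℝ) 1 zero_le_one) := continuous_projIcc
  unfold extendLine
  fun_prop

lemma monotone_extendLine (hφ : Monotone φ) : Monotone (extendLine φ) := by
  have monotone_sub : Monotone fun x : ℝ => x - projIcc 0 1 zero_le_one x := by
    intro x y hxy
    simp only [coe_projIcc]
    grind
  exact fun x y hxy => add_le_add (hφ (monotone_projIcc _ hxy)) (monotone_sub hxy)

lemma tendsto_extendLine_atTop (φ : C(I, I)) : Tendsto (extendLine φ) atTop atTop := by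
  refine tendsto_atTop_mono (fun x => ?_) (tendsto_atTop_add_const_right _ (-1) tendsto_id)
  have := unitInterval.nonneg (φ (projIcc 0 1 zero_le_one x))
  have := unitInterval.le_one (projIcc 0 1 zero_le_one x)
  simp only [extendLine, id]
  linarith

lemma tendsto_extendLine_atBot (φ : C(I, I)) : Tendsto (extendLine φ) atBot atBot := by
  refine tendsto_atBot_mono (fun x => ?_) (tendsto_atBot_add_const_right _ 1 tendsto_id)
  have := unitInterval.le_one (φ (projIcc 0 1 zero_le_one x))
  have := unitInterval.nonneg (projIcc 0 1 zero_le_one x)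
  simp only [extendLine, id]
  linarith

lemma extendLine_of_le_zero (h0 : φ 0 = 0) {x : ℝ} (hx : x ≤ 0) : extendLine φ x = x := by
  simp [extendLine, projIcc_eq_zero.2 hx, h0]

lemma extendLine_of_one_le (h1 : φ 1 = 1) {x : ℝ} (hx : 1 ≤ x) : extendLine φ x = x := by
  simp [extendLine, projIcc_eq_one.2 hx, h1]

lemma extendLine_of_mem {x : ℝ} (hx : x ∈ I) : extendLine φ x = φ ⟨x, hx⟩ := by
  simp [extendLine, projIcc_of_mem _ hx]

lemma projIcc_extendLine (h0 : φ 0 = 0) (h1 : φ 1 = 1) (x : ℝ) :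
    projIcc 0 1 zero_le_one (extendLine φ x) = φ (projIcc 0 1 zero_le_one x) := by
  rcases le_total x 0 with hx0 | hx0
  · rw [extendLine_of_le_zero h0 hx0, projIcc_eq_zero.2 hx0, h0]
  rcases le_total 1 x with hx1 | hx1
  · rw [extendLine_of_one_le h1 hx1, projIcc_eq_one.2 hx1, h1]
  · rw [extendLine_of_mem ⟨hx0, hx1⟩, projIcc_val, projIcc_of_mem _ ⟨hx0, hx1⟩]

lemma extendLine_neg_iff (hφ : Monotone φ) (h0 : φ 0 = 0) {x : ℝ} :
    extendLine φ x < 0 ↔ x < 0 := by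
  refine ⟨fun h => ?_, fun h => by rwa [extendLine_of_le_zero h0 h.le]⟩
  by_contra! hx
  have := monotone_extendLine hφ hx
  rw [extendLine_of_le_zero h0 le_rfl] at this
  exact this.not_gt h

lemma one_lt_extendLine_iff (hφ : Monotone φ) (h1 : φ 1 = 1) {x : ℝ} :
    1 < extendLine φ x ↔ 1 < x := by
  refine ⟨fun h => ?_, fun h => by rwa [extendLine_of_one_le h1 h.le]⟩
  by_contra! hx
  have := monotone_extendLine hφ hx
  rw [extendLine_of_one_le h1 le_rfl] at this
  exact this.not_gt h

end ExtendLine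

section CommonRefinement

variable {φ ψ : C(I, I)}

lemma extendLine_balancePoint (φ : C(I, I)) (hψ : Monotone ψ) (c : ℝ) :
    extendLine φ (balancePoint (extendLine φ) (extendLine ψ) c) =
      extendLine ψ (c - balancePoint (extendLine φ) (extendLine ψ) c) :=
  apply_balancePoint (continuous_extendLine φ) (continuous_extendLine ψ) (monotone_extendLine hψ)
    (tendsto_extendLine_atBot φ) (tendsto_extendLine_atTop φ) c

namespace IsReparam

lemma balancePoint_extendLine_zero (hφ : IsReparam φ) (hψ : IsReparam ψ) :
    balancePoint (extendLine φ) (extendLine ψ) 0 = 0 := by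
  set x := balancePoint (extendLine φ) (extendLine ψ) 0 with hx
  have neg_iff : x < 0 ↔ 0 - x < 0 := by
    rw [← extendLine_neg_iff hφ.monotone hφ.map_zero, hx, extendLine_balancePoint φ hψ.monotone,
      extendLine_neg_iff hψ.monotone hψ.map_zero]
  grind

lemma balancePoint_extendLine_two (hφ : IsReparam φ) (hψ : IsReparam ψ) :
    balancePoint (extendLine φ) (extendLine ψ) 2 = 1 := by
  set x := balancePoint (extendLine φ) (extendLine ψ) 2 with hx
  have one_lt_iff : 1 < x ↔ 1 < 2 - x := by
    rw [← one_lt_extendLine_iff hφ.monotone hφ.map_one, hx, extendLine_balancePoint φ hψ.monotone,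
      one_lt_extendLine_iff hψ.monotone hψ.map_one]
  grind

theorem exists_comp_eq_comp (hφ : IsReparam φ) (hψ : IsReparam ψ) :
    ∃ α β : C(I, I), IsReparam α ∧ IsReparam β ∧ φ.comp α = ψ.comp β := by
  let s := balancePoint (extendLine φ) (extendLine ψ)
  have s_mono : Monotone s :=
    monotone_balancePoint (continuous_extendLine φ) (continuous_extendLine ψ)
      (monotone_extendLine hψ.monotone) (tendsto_extendLine_atBot φ) (tendsto_extendLine_atTop φ)
  have sub_mono : Monotone fun c => c - s c :=
    monotone_sub_balancePoint (continuous_extendLine φ) (continuous_extendLine ψ)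
      (monotone_extendLine hφ.monotone) (monotone_extendLine hψ.monotone)
      (tendsto_extendLine_atBot φ) (tendsto_extendLine_atTop φ)
  have s_cont : Continuous s :=
    (lipschitzWith_one_of_monotone_of_monotone_sub s_mono sub_mono).continuous
  have s_zero : s 0 = 0 := hφ.balancePoint_extendLine_zero hψ
  have s_two : s 2 = 1 := hφ.balancePoint_extendLine_two hψ
  obtain ⟨α, hα, α_eq⟩ :=
    exists_isReparam_eq_projIcc s_cont s_mono zero_le_two s_zero.le s_two.ge
  obtain ⟨β, hβ, β_eq⟩ := exists_isReparam_eq_projIcc (continuous_id.sub s_cont) sub_mono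
    zero_le_two (by simp [s_zero]) (by norm_num [s_two])
  refine ⟨α, β, hα, hβ, ContinuousMap.ext fun u => ?_⟩
  calc φ (α u)
      = projIcc 0 1 zero_le_one (extendLine φ (s (2 * u))) := by
        rw [projIcc_extendLine hφ.map_zero hφ.map_one, α_eq]
    _ = projIcc 0 1 zero_le_one (extendLine ψ (2 * u - s (2 * u))) := by
        rw [extendLine_balancePoint φ hψ.monotone]
    _ = ψ (β u) := by rw [projIcc_extendLine hψ.map_zero hψ.map_one, β_eq]; rfl

end IsReparam

end CommonRefinement

section NormComp

/-- The chart `t ↦ t / 2` of the first half of `[0,1]`. A normalized composition `γ` of `γ₁` and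
`γ₂` is handled through `γ ∘ lowerHalf = γ₁` and `γ ∘ upperHalf = γ₂`. -/
noncomputable def lowerHalf : C(I, I) :=
  ⟨fun t => ⟨t / 2, by constructor <;> linarith [t.2.1, t.2.2]⟩, by fun_prop⟩

/-- The chart `t ↦ (1 + t) / 2` of the second half of `[0,1]`; see `lowerHalf`. -/
noncomputable def upperHalf : C(I, I) :=
  ⟨fun t => ⟨(1 + t) / 2, by constructor <;> linarith [t.2.1, t.2.2]⟩, by fun_prop⟩

lemma coe_lowerHalf (t : I) : (lowerHalf t : ℝ) = t / 2 := rfl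

lemma coe_upperHalf (t : I) : (upperHalf t : ℝ) = (1 + t) / 2 := rfl

lemma lowerHalf_le_lowerHalf_iff {s t : I} : lowerHalf s ≤ lowerHalf t ↔ s ≤ t := by
  simp only [← Subtype.coe_le_coe, coe_lowerHalf]
  constructor <;> intro h <;> linarith

lemma upperHalf_le_upperHalf_iff {s t : I} : upperHalf s ≤ upperHalf t ↔ s ≤ t := by
  simp only [← Subtype.coe_le_coe, coe_upperHalf]
  constructor <;> intro h <;> linarith

lemma lowerHalf_one : lowerHalf 1 = upperHalf 0 :=
  Subtype.ext (by simp [coe_lowerHalf, coe_upperHalf])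

lemma exists_lowerHalf_or_upperHalf (t : I) :
    (∃ u, lowerHalf u = t) ∨ ∃ u, upperHalf u = t := by
  rcases le_total (t : ℝ) (1 / 2) with ht | ht
  · refine .inl ⟨⟨2 * t, by linarith [t.2.1], by linarith⟩, Subtype.ext ?_⟩
    rw [coe_lowerHalf]
    ring
  · refine .inr ⟨⟨2 * t - 1, by linarith, by linarith [t.2.2]⟩, Subtype.ext ?_⟩
    rw [coe_upperHalf]
    ring

variable {X : Type*} [TopologicalSpace X] {γ₁ γ₂ : C(I, X)}

lemma normComp_lowerHalf (h : γ₁ 1 = γ₂ 0) (t : I) : normComp γ₁ γ₂ h (lowerHalf t) = γ₁ t := by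
  have half : (lowerHalf t : ℝ) ≤ 1 / 2 := by
    rw [coe_lowerHalf]
    linarith [t.2.2]
  change Path.trans _ _ (lowerHalf t) = γ₁ t
  rw [Path.trans_apply, dif_pos half]
  exact congrArg γ₁ (Subtype.ext (by simp only [coe_lowerHalf]; ring))

lemma normComp_upperHalf (h : γ₁ 1 = γ₂ 0) (t : I) : normComp γ₁ γ₂ h (upperHalf t) = γ₂ t := by
  rcases t.2.1.eq_or_lt with ht | ht
  · obtain rfl : 0 = t := Subtype.ext ht
    rw [← lowerHalf_one, normComp_lowerHalf, h]
  have half : ¬(upperHalf t : ℝ) ≤ 1 / 2 := by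
    rw [coe_upperHalf]
    linarith
  change Path.trans _ _ (upperHalf t) = γ₂ t
  rw [Path.trans_apply, dif_neg half]
  exact congrArg γ₂ (Subtype.ext (by simp only [coe_upperHalf]; ring))

lemma eq_normComp {γ : C(I, X)} (h : γ₁ 1 = γ₂ 0) (hlower : ∀ t, γ (lowerHalf t) = γ₁ t)
    (hupper : ∀ t, γ (upperHalf t) = γ₂ t) : γ = normComp γ₁ γ₂ h := by
  ext t
  obtain ⟨u, rfl⟩ | ⟨u, rfl⟩ := exists_lowerHalf_or_upperHalf t
  · rw [hlower, normComp_lowerHalf]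
  · rw [hupper, normComp_upperHalf]

lemma monotone_normComp [Preorder X] (h : γ₁ 1 = γ₂ 0) (hγ₁ : Monotone γ₁) (hγ₂ : Monotone γ₂) :
    Monotone (normComp γ₁ γ₂ h) := by
  intro s t hst
  obtain ⟨u, rfl⟩ | ⟨u, rfl⟩ := exists_lowerHalf_or_upperHalf s <;>
    obtain ⟨v, rfl⟩ | ⟨v, rfl⟩ := exists_lowerHalf_or_upperHalf t <;>
    simp only [normComp_lowerHalf, normComp_upperHalf]
  · exact hγ₁ (lowerHalf_le_lowerHalf_iff.1 hst)
  · calc γ₁ u ≤ γ₁ 1 := hγ₁ unitInterval.le_one'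
      _ = γ₂ 0 := h
      _ ≤ γ₂ v := hγ₂ unitInterval.nonneg'
  · have hst' : (1 + u : ℝ) / 2 ≤ v / 2 := hst
    have hu : (u : ℝ) = 0 := by linarith [u.2.1, v.2.2]
    have hv : (v : ℝ) = 1 := by linarith [u.2.1, v.2.2]
    rw [show u = 0 from Subtype.ext hu, show v = 1 from Subtype.ext hv, h]
  · exact hγ₂ (upperHalf_le_upperHalf_iff.1 hst)

end NormComp

lemma exists_isReparam_normComp_comp {X : Type*} [TopologicalSpace X] {γ₁ γ₂ : C(I, X)}
    (h : γ₁ 1 = γ₂ 0) {φ ψ : C(I, I)} (hφ : IsReparam φ) (hψ : IsReparam ψ)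
    (h' : γ₁.comp φ 1 = γ₂.comp ψ 0) :
    ∃ Φ : C(I, I), IsReparam Φ ∧
      (normComp γ₁ γ₂ h).comp Φ = normComp (γ₁.comp φ) (γ₂.comp ψ) h' := by
  have glue : lowerHalf.comp φ 1 = upperHalf.comp ψ 0 := by
    rw [ContinuousMap.comp_apply, ContinuousMap.comp_apply, hφ.map_one, hψ.map_zero, lowerHalf_one]
  let Φ := normComp (lowerHalf.comp φ) (upperHalf.comp ψ) glue
  have Φ_lower (t : I) : Φ (lowerHalf t) = lowerHalf (φ t) := normComp_lowerHalf glue t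
  have Φ_upper (t : I) : Φ (upperHalf t) = upperHalf (ψ t) := normComp_upperHalf glue t
  refine ⟨Φ, ⟨?monotone, ?surjective⟩, eq_normComp h' ?lower ?upper⟩
  case monotone =>
    exact monotone_normComp glue (fun _ _ hst => lowerHalf_le_lowerHalf_iff.2 (hφ.monotone hst))
      fun _ _ hst => upperHalf_le_upperHalf_iff.2 (hψ.monotone hst)
  case surjective =>
    intro t
    obtain ⟨u, rfl⟩ | ⟨u, rfl⟩ := exists_lowerHalf_or_upperHalf t
    · obtain ⟨v, rfl⟩ := hφ.surjective u
      exact ⟨lowerHalf v, Φ_lower v⟩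
    · obtain ⟨v, rfl⟩ := hψ.surjective u
      exact ⟨upperHalf v, Φ_upper v⟩
  case lower =>
    intro t
    rw [ContinuousMap.comp_apply, Φ_lower, normComp_lowerHalf, ContinuousMap.comp_apply]
  case upper =>
    intro t
    rw [ContinuousMap.comp_apply, Φ_upper, normComp_upperHalf, ContinuousMap.comp_apply]

section Satur

variable {X : Type*} [TopologicalSpace X] {P : Set C(I, X)}

lemma subset_satur (P : Set C(I, X)) : P ⊆ satur P := fun _ hγ =>
  ⟨.id I, monotone_id, Function.surjective_id, hγ⟩

lemma comp_mem_satur (hP : ∀ γ ∈ P, ∀ φ : C(I, I), IsReparam φ → γ.comp φ ∈ P) {γ : C(I, X)}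
    (hγ : γ ∈ satur P) {φ : C(I, I)} (hφ : IsReparam φ) : γ.comp φ ∈ satur P := by
  obtain ⟨ψ, hψm, hψs, hγψ⟩ := hγ
  obtain ⟨α, β, hα, hβ, comp_eq⟩ := hφ.exists_comp_eq_comp ⟨hψm, hψs⟩
  refine ⟨α, hα.monotone, hα.surjective, ?_⟩
  rw [ContinuousMap.comp_assoc, comp_eq, ← ContinuousMap.comp_assoc]
  exact hP _ hγψ β hβ

lemma normComp_mem_satur
    (hP : ∀ γ₁ ∈ P, ∀ γ₂ ∈ P, ∀ h : γ₁ 1 = γ₂ 0, normComp γ₁ γ₂ h ∈ P) {γ₁ γ₂ : C(I, X)}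
    (hγ₁ : γ₁ ∈ satur P) (hγ₂ : γ₂ ∈ satur P) (h : γ₁ 1 = γ₂ 0) :
    normComp γ₁ γ₂ h ∈ satur P := by
  obtain ⟨φ, hφm, hφs, hγφ⟩ := hγ₁
  obtain ⟨ψ, hψm, hψs, hγψ⟩ := hγ₂
  have hφ : IsReparam φ := ⟨hφm, hφs⟩
  have hψ : IsReparam ψ := ⟨hψm, hψs⟩
  have h' : γ₁.comp φ 1 = γ₂.comp ψ 0 := by
    rw [ContinuousMap.comp_apply, ContinuousMap.comp_apply, hφ.map_one, hψ.map_zero, h]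
  obtain ⟨Φ, hΦ, comp_eq⟩ := exists_isReparam_normComp_comp h hφ hψ h'
  exact ⟨Φ, hΦ.monotone, hΦ.surjective, comp_eq ▸ hP _ hγφ _ hγψ h'⟩

end Satur

/-- If a set `P` of continuous maps `[0,1] → X` is closed under precomposition by elements of
`M(1,1)` and under normalized composition of composable pairs, then `P ⊆ P̂` and `P̂` again
satisfies these two closure properties. -/
theorem stmt12 {X : Type*} [TopologicalSpace X] (P : Set C(unitInterval, X))
    (hP1 : ∀ γ ∈ P, ∀ φ : C(unitInterval, unitInterval),
      Monotone φ → Function.Surjective φ → γ.comp φ ∈ P)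
    (hP2 : ∀ γ₁ ∈ P, ∀ γ₂ ∈ P, ∀ h : γ₁ 1 = γ₂ 0, normComp γ₁ γ₂ h ∈ P) :
    P ⊆ satur P ∧
    (∀ γ ∈ satur P, ∀ φ : C(unitInterval, unitInterval),
      Monotone φ → Function.Surjective φ → γ.comp φ ∈ satur P) ∧
    (∀ γ₁ ∈ satur P, ∀ γ₂ ∈ satur P, ∀ h : γ₁ 1 = γ₂ 0,
      normComp γ₁ γ₂ h ∈ satur P) := by
  have hP1' : ∀ γ ∈ P, ∀ φ : C(I, I), IsReparam φ → γ.comp φ ∈ P :=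
    fun γ hγ φ hφ => hP1 γ hγ φ hφ.monotone hφ.surjective
  exact ⟨subset_satur P,
    fun _ hγ _ hφm hφs => comp_mem_satur hP1' hγ ⟨hφm, hφs⟩,
    fun _ hγ₁ _ hγ₂ h => normComp_mem_satur hP2 hγ₁ hγ₂ h⟩
end
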